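/- arXiv:1205.6570 — 4 statements merged into one kernel-verified Lean document; each statement's English description precedes it below -/
import Mathlib

section
/- For every integer k ≥ 2, every integer i with 1 ≤ i ≤ k, and every nonnegative integer m, the number of partitions of m all of whose parts are incongruent to 0, k+1−i, and k+i modulo 2k+1 (equivalently, incongruent to 0 and ±(k+1−i) modulo 2k+1) is equal to the number of partitions of m that have difference at least 2 at distance k−1 and in which at most k−i parts are equal to 1. (For k = 2 these are the Rogers–Ramanujan identities.) -/
/-!
Put `a = k + 1 - i` and write `f_j` for the multiplicity of the part `j`. Difference at least `2` at
distance `k - 1` means `f_j + f_{j+1} ≤ k - 1` for all `j`, and the condition on the ones is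
`f_1 < a`. The proof is Andrews's, with his variable `x` specialised to the powers `q ^ N`.

Let `F_{N,a}` be the generating function of the partitions with all parts greater than `N`,
`f_j + f_{j+1} ≤ k - 1` and `f_{N+1} < a`. Removing the copies of `N + 1` when there are exactly `a`
of them gives `F_{N,a+1} = F_{N,a} + q ^ ((N+1)a) F_{N+1,k-a}` (`gf_gor_succ`). Together with
`F_{N,0} = 0` and `F_{N,a} ≡ 1` modulo `q ^ N` for `a ≥ 1`, this determines `F`. The series
`S_{N,a} = ∑ (-1) ^ n q ^ (kNn + (2k+1)n(n+1)/2 - an) (1 - q ^ ((N+2n+1)a)) (q)_{N+n} / (q)_n`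
satisfies the same recurrence by a telescoping identity (`sum_summand_succ`), hence
`(q)_∞ F_{N,a} = S_{N,a}` (`eq_sum_summand`).

For `N = 0` the series is a theta series, which the Jacobi triple product (`jtp`) turns into the
product of the `1 - q ^ j` over `j ≡ 0, ±a` modulo `2k + 1`. The triple product comes from its
finite form (`finite_jtp`), a case of the `q`-binomial theorem. Dividing by `(q)_∞` leaves the
product of the `1 / (1 - q ^ j)` over the remaining `j`, the generating function of the partitions
into those parts (`gf_partsIn_mul`).

Infinite sums and products never occur: all identities are congruences modulo a power `X ^ L`
between finite ones in `ℤ⟦X⟧`, and `L = m + 1` suffices for the coefficient of `X ^ m`.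
-/


/-- A partition of `m` has difference at least 2 at distance `t` if, writing its parts
in weakly increasing order, any two parts at distance `t` differ by at least 2
(equivalently, for the decreasing arrangement `p₁ ≥ ⋯ ≥ pₙ`, `p_s - p_{s+t} ≥ 2`
whenever `s ≥ 1` and `s + t ≤ n`). -/
def Diff2AtDist (t : ℕ) {m : ℕ} (p : Nat.Partition m) : Prop :=
  ∀ s : ℕ, s + t < (p.parts.sort (· ≤ ·)).length →
    (p.parts.sort (· ≤ ·)).getD s 0 + 2 ≤ (p.parts.sort (· ≤ ·)).getD (s + t) 0

namespace Gordon

open PowerSeries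

/-! ### Gaussian binomials and the finite triple product -/

/-- The product `(Q; Q)_n` in the base `Q = X ^ p`. -/
noncomputable def qfac (p n : ℕ) : ℤ⟦X⟧ := ∏ i ∈ Finset.range n, (1 - X ^ (p * (i + 1)))

/-- The Gaussian binomial coefficient `[M choose j]` in the base `Q = X ^ p`, defined by the
`Q`-Pascal recurrence `[M+1, j+1] = [M, j] + Q ^ (j+1) * [M, j+1]`. -/
noncomputable def gb (p : ℕ) : ℕ → ℕ → ℤ⟦X⟧
  | _, 0 => 1
  | 0, _ + 1 => 0
  | M + 1, j + 1 => gb p M j + X ^ (p * (j + 1)) * gb p M (j + 1)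

theorem gb_zero_right (p M : ℕ) : gb p M 0 = 1 := by cases M <;> rfl

theorem gb_succ_succ (p M j : ℕ) :
    gb p (M + 1) (j + 1) = gb p M j + X ^ (p * (j + 1)) * gb p M (j + 1) := rfl

theorem gb_eq_zero (p : ℕ) : ∀ {M j : ℕ}, M < j → gb p M j = 0
  | 0, _ + 1, _ => rfl
  | M + 1, j + 1, h => by
    rw [gb_succ_succ, gb_eq_zero p (by omega : M < j), gb_eq_zero p (by omega : M < j + 1)]
    simp

theorem choose_two_succ (n : ℕ) : (n + 1).choose 2 = n.choose 2 + n := by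
  rw [Nat.choose_succ_succ' n 1]; simp; ring

/-- The `Q`-binomial theorem, in the homogeneous form that needs no inverses. -/
theorem qbinom (p : ℕ) (u : ℤ⟦X⟧) (M : ℕ) : ∀ v : ℤ⟦X⟧,
    ∏ i ∈ Finset.range M, (u + v * X ^ (p * i)) =
      ∑ j ∈ Finset.range (M + 1), X ^ (p * j.choose 2) * gb p M j * v ^ j * u ^ (M - j) := by
  induction M with
  | zero => intro v; simp [gb_zero_right]
  | succ M ih =>
    intro v
    have h1 : ∏ i ∈ Finset.range (M + 1), (u + v * X ^ (p * i)) =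
        (u + v) * ∏ i ∈ Finset.range M, (u + (v * X ^ p) * X ^ (p * i)) := by
      rw [Finset.prod_range_succ', mul_comm]
      congr 1
      · simp
      · refine Finset.prod_congr rfl fun i _ => ?_
        ring
    rw [h1, ih, add_mul]
    have h2 : u * ∑ j ∈ Finset.range (M + 1),
          X ^ (p * j.choose 2) * gb p M j * (v * X ^ p) ^ j * u ^ (M - j) =
        (∑ j ∈ Finset.range (M + 1), X ^ (p * (j + 1).choose 2) *
          (X ^ (p * (j + 1)) * gb p M (j + 1)) * v ^ (j + 1) * u ^ (M - j)) + u ^ (M + 1) := by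
      rw [Finset.sum_range_succ' _ M, Finset.sum_range_succ _ M, gb_eq_zero p (Nat.lt_succ_self M),
        mul_add, Finset.mul_sum]
      congr 1
      · simp only [mul_zero, zero_mul, add_zero]
        refine Finset.sum_congr rfl fun j hj => ?_
        obtain ⟨d, rfl⟩ : ∃ d, M = j + 1 + d := ⟨M - (j + 1), by
          have := Finset.mem_range.1 hj; omega⟩
        have e1 : j + 1 + d - (j + 1) = d := by omega
        have e2 : j + 1 + d - j = d + 1 := by omega
        rw [e1, e2]
        ring
      · simp [gb_zero_right, pow_succ, mul_comm]
    have h3 : v * ∑ j ∈ Finset.range (M + 1),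
          X ^ (p * j.choose 2) * gb p M j * (v * X ^ p) ^ j * u ^ (M - j) =
        ∑ j ∈ Finset.range (M + 1), X ^ (p * (j + 1).choose 2) *
          gb p M j * v ^ (j + 1) * u ^ (M - j) := by
      rw [Finset.mul_sum]
      refine Finset.sum_congr rfl fun j _ => ?_
      rw [choose_two_succ]
      ring
    rw [h2, h3, Finset.sum_range_succ' _ (M + 1)]
    simp only [gb_zero_right, gb_succ_succ, Nat.add_sub_add_right]
    simp only [mul_add, add_mul, Finset.sum_add_distrib]
    simp
    ring

theorem gb_mul_qfac (p : ℕ) : ∀ {M j : ℕ}, j ≤ M → gb p M j * qfac p j * qfac p (M - j) = qfac p M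
  | M, 0, _ => by simp [gb_zero_right, qfac]
  | M + 1, j + 1, h => by
    have hs : ∀ n, qfac p (n + 1) = qfac p n * (1 - X ^ (p * (n + 1))) := fun n =>
      Finset.prod_range_succ _ _
    have h1 := gb_mul_qfac p (by omega : j ≤ M)
    rw [gb_succ_succ, Nat.add_sub_add_right]
    rcases (by omega : j = M ∨ j + 1 ≤ M) with rfl | h'
    · rw [gb_eq_zero p (Nat.lt_succ_self j), hs]
      linear_combination (1 - X ^ (p * (j + 1))) * h1
    · have h2 := gb_mul_qfac p h'
      obtain ⟨d, rfl⟩ : ∃ d, M = j + 1 + d := ⟨M - (j + 1), by omega⟩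
      have e1 : j + 1 + d - (j + 1) = d := by omega
      have e2 : j + 1 + d - j = d + 1 := by omega
      rw [e1] at h2
      rw [e2] at h1 ⊢
      rw [hs (j + 1 + d)]
      rw [hs d] at h1 ⊢
      rw [hs j] at h2 ⊢
      linear_combination (1 - X ^ (p * (j + 1))) * h1 +
        X ^ (p * (j + 1)) * (1 - X ^ (p * (d + 1))) * h2

theorem dvd_qfac_sub {p d n : ℕ} (hp : 1 ≤ p) (h : d ≤ n) :
    (X : ℤ⟦X⟧) ^ d ∣ qfac p n - qfac p d := by
  induction n, h using Nat.le_induction with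
  | base => simp
  | succ n hn ih =>
    have e : qfac p (n + 1) - qfac p d =
        (qfac p n - qfac p d) - qfac p n * X ^ (p * (n + 1)) := by
      rw [qfac, Finset.prod_range_succ, ← qfac]; ring
    rw [e]
    exact dvd_sub ih (Dvd.dvd.mul_left (pow_dvd_pow _ (by nlinarith)) _)

/-- A power series with constant coefficient `1` is a unit, so it can be cancelled modulo
`X ^ d`. -/
theorem dvd_of_dvd_mul {d : ℕ} {u f : ℤ⟦X⟧} (hu : constantCoeff u = 1) (h : X ^ d ∣ u * f) :
    X ^ d ∣ f := by
  have : IsUnit u := by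
    rw [PowerSeries.isUnit_iff_constantCoeff, hu]; exact isUnit_one
  exact (this.dvd_mul_left).1 h

theorem constantCoeff_qfac {p : ℕ} (hp : 1 ≤ p) (n : ℕ) : constantCoeff (qfac p n) = 1 := by
  rw [qfac, map_prod]
  refine Finset.prod_eq_one fun i _ => ?_
  have : p * (i + 1) ≠ 0 := by positivity
  simp [this]

/-- Modulo `X ^ d` all the `qfac p n` with `n ≥ d` coincide, so the Gaussian binomial
`(Q)_M / ((Q)_j (Q)_{M-j})` is there the inverse of `qfac p L`. -/
theorem dvd_gb_sub {p d M j L : ℕ} (hp : 1 ≤ p) (hj : j ≤ M) (h1 : d ≤ j) (h2 : d ≤ M - j)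
    (h3 : d ≤ L) : (X : ℤ⟦X⟧) ^ d ∣ gb p M j * qfac p L - 1 := by
  have hM : d ≤ M := by omega
  refine dvd_of_dvd_mul (constantCoeff_qfac hp d) ?_
  obtain ⟨r1, e1⟩ := dvd_qfac_sub hp h1
  obtain ⟨r2, e2⟩ := dvd_qfac_sub hp h2
  obtain ⟨r3, e3⟩ := dvd_qfac_sub hp h3
  obtain ⟨r4, e4⟩ := dvd_qfac_sub hp hM
  have key := gb_mul_qfac p hj
  refine ⟨gb p M j * qfac p d * r3 + r4 - gb p M j * qfac p j * r2 - gb p M j * r1 * qfac p d, ?_⟩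
  linear_combination key + gb p M j * qfac p d * e3 + e4 - gb p M j * qfac p j * e2
    - gb p M j * e1 * qfac p d

/-- The finite triple product identity with `z = X ^ a` and `Q = X ^ p`: the factors `1 - z Q ^ i`
and `1 - Q ^ (i+1) / z` multiply to `∑ m, (-1) ^ m z ^ m Q ^ (m(m-1)/2) [2L, L+m]`, summed over
`-L ≤ m ≤ L`. The first sum collects `m = -i`, the second one `m = i + 1`. -/
theorem finite_jtp {p a b : ℕ} (hp : a + b = p) (L : ℕ) :
    ∏ i ∈ Finset.range L, ((1 - X ^ (p * i + a)) * (1 - X ^ (p * i + b))) =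
      (∑ i ∈ Finset.range (L + 1),
        (-1 : ℤ⟦X⟧) ^ i * X ^ (a * i.choose 2 + b * (i + 1).choose 2) * gb p (2 * L) (L - i)) -
      ∑ i ∈ Finset.range L, (-1 : ℤ⟦X⟧) ^ i *
        X ^ (a * (i + 2).choose 2 + b * (i + 1).choose 2) * gb p (2 * L) (L + 1 + i) := by
  set e0 := a * L + p * (L.choose 2 + L * L) with he0
  -- With `u = Q ^ L` and `v = -z`, half of the `2L` factors of the binomial theorem give the factors
  -- `1 - z Q ^ i` and half give the `1 - Q ^ (i+1) / z`, up to the common factor `(-1) ^ L X ^ e0`.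
  have h := qbinom p (X ^ (p * L)) (2 * L) (-X ^ a)
  have hC : ∀ n : ℕ, 2 * n.choose 2 + n = n * n := by
    intro n
    induction n with
    | zero => rfl
    | succ n ih => rw [choose_two_succ]; linarith
  have hadd : ∀ m n : ℕ, (m + n).choose 2 = m.choose 2 + n.choose 2 + m * n := by
    intro m n
    have := hC (m + n)
    have := hC m
    have := hC n
    nlinarith
  have hne : ((-1 : ℤ⟦X⟧) ^ L * X ^ e0) ≠ 0 := by
    simp [PowerSeries.X_ne_zero]
  have hl : ∏ i ∈ Finset.range (2 * L), ((X : ℤ⟦X⟧) ^ (p * L) + -X ^ a * X ^ (p * i)) =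
      (-1 : ℤ⟦X⟧) ^ L * X ^ e0 *
        ∏ i ∈ Finset.range L, ((1 - X ^ (p * i + a)) * (1 - X ^ (p * i + b))) := by
    rw [two_mul, Finset.prod_range_add, ← Finset.prod_range_reflect _ L]
    have s1 : ∀ i ∈ Finset.range L,
        (X : ℤ⟦X⟧) ^ (p * L) + -X ^ a * X ^ (p * (L - 1 - i)) =
          -X ^ a * X ^ (p * (L - 1 - i)) * (1 - X ^ (p * i + b)) := by
      intro i hi
      obtain ⟨d, rfl⟩ : ∃ d, L = i + 1 + d := ⟨L - (i + 1), by
          have := Finset.mem_range.1 hi; omega⟩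
      have : i + 1 + d - 1 - i = d := by omega
      rw [this]
      subst hp
      ring
    have s2 : ∀ i ∈ Finset.range L,
        (X : ℤ⟦X⟧) ^ (p * L) + -X ^ a * X ^ (p * (L + i)) =
          X ^ (p * L) * (1 - X ^ (p * i + a)) := by
      intro i _
      ring
    rw [Finset.prod_congr rfl s1, Finset.prod_congr rfl s2]
    simp only [Finset.prod_mul_distrib]
    rw [Finset.prod_range_reflect (fun i => (X : ℤ⟦X⟧) ^ (p * i)) L]
    have s3 : ∏ i ∈ Finset.range L, (X : ℤ⟦X⟧) ^ (p * i) = X ^ (p * L.choose 2) := by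
      rw [Finset.prod_pow_eq_pow_sum, ← Finset.mul_sum, Finset.sum_range_id, Nat.choose_two_right]
    rw [s3]
    simp only [Finset.prod_const, Finset.card_range]
    rw [neg_pow, he0]
    ring
  rw [hl] at h
  refine mul_left_cancel₀ hne ?_
  rw [h, show 2 * L + 1 = (L + 1) + L by ring, Finset.sum_range_add,
    ← Finset.sum_range_reflect _ (L + 1), mul_sub, Finset.mul_sum, Finset.mul_sum, sub_eq_add_neg,
    ← Finset.sum_neg_distrib]
  congr 1
  · refine Finset.sum_congr rfl fun i hi => ?_
    obtain ⟨d, rfl⟩ : ∃ d, L = i + d := ⟨L - i, by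
          have := Finset.mem_range.1 hi; omega⟩
    have e1 : i + d + 1 - 1 - i = d := by omega
    have e2 : i + d - i = d := by omega
    have e3 : 2 * (i + d) - d = 2 * i + d := by omega
    rw [e1, e2, e3, neg_pow]
    have e4 : p * d.choose 2 + a * d + p * (i + d) * (2 * i + d) =
        e0 + (a * i.choose 2 + b * (i + 1).choose 2) := by
      rw [he0, choose_two_succ]
      have h1 := hadd i d
      have h2 := hC i
      subst hp
      zify at *
      linear_combination (-(a + b : ℤ)) * h1 - (a + b : ℤ) * h2
    have e5 : (X : ℤ⟦X⟧) ^ (p * d.choose 2) * X ^ (a * d) * X ^ (p * (i + d) * (2 * i + d)) =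
        X ^ e0 * X ^ (a * i.choose 2 + b * (i + 1).choose 2) := by
      rw [← pow_add, ← pow_add, ← pow_add, e4]
    have e6 : (-1 : ℤ⟦X⟧) ^ d = (-1) ^ (i + d) * (-1) ^ i := by
      rw [← pow_add, show i + d + i = 2 * i + d by ring, pow_add, pow_mul]
      simp
    rw [← pow_mul, ← pow_mul, e6]
    linear_combination (-1 : ℤ⟦X⟧) ^ (i + d) * (-1) ^ i * gb p (2 * (i + d)) d * e5
  · refine Finset.sum_congr rfl fun i hi => ?_
    obtain ⟨d, hd⟩ : ∃ d, L = i + 1 + d := ⟨L - (i + 1), by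
          have := Finset.mem_range.1 hi; omega⟩
    have e3 : 2 * L - (L + 1 + i) = d := by omega
    rw [e3, neg_pow]
    have e4 : p * (L + 1 + i).choose 2 + a * (L + 1 + i) + p * L * d =
        e0 + (a * (i + 2).choose 2 + b * (i + 1).choose 2) := by
      have h1 := hadd L (i + 1)
      rw [show L + (i + 1) = L + 1 + i by ring] at h1
      have h2 := choose_two_succ (i + 1)
      rw [he0, h2, h1, ← hp]
      zify at *
      linear_combination (-(a + b : ℤ)) * L * hd
    have e5 : (X : ℤ⟦X⟧) ^ (p * (L + 1 + i).choose 2) * X ^ (a * (L + 1 + i)) * X ^ (p * L * d) =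
        X ^ e0 * X ^ (a * (i + 2).choose 2 + b * (i + 1).choose 2) := by
      rw [← pow_add, ← pow_add, ← pow_add, e4]
    rw [show L + 1 + i = L + (i + 1) by ring] at e5 ⊢
    rw [← pow_mul, ← pow_mul, pow_add (-1 : ℤ⟦X⟧) L, pow_succ (-1 : ℤ⟦X⟧) i]
    linear_combination (-1 : ℤ⟦X⟧) ^ L * ((-1) ^ i * (-1)) * gb p (2 * L) (L + (i + 1)) * e5


theorem le_choose_two_succ (n : ℕ) : n ≤ (n + 1).choose 2 := by
  rw [choose_two_succ]; omega

/-- The triple product identity modulo `X ^ L`, with the terms `m = -i` and `m = i + 1` of the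
bilateral sum paired. -/
theorem jtp {p a b : ℕ} (hp : a + b = p) (ha : 1 ≤ a) (hb : 1 ≤ b) (L : ℕ) :
    (X : ℤ⟦X⟧) ^ L ∣
      (∏ i ∈ Finset.range L, ((1 - X ^ (p * i + a)) * (1 - X ^ (p * i + b)))) * qfac p L -
      ∑ i ∈ Finset.range L, (-1) ^ i * X ^ (a * i.choose 2 + b * (i + 1).choose 2) *
        (1 - X ^ ((2 * i + 1) * a)) := by
  have hsplit : (∏ i ∈ Finset.range L, ((1 - (X : ℤ⟦X⟧) ^ (p * i + a)) * (1 - X ^ (p * i + b)))) *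
        qfac p L - ∑ i ∈ Finset.range L, (-1) ^ i * X ^ (a * i.choose 2 + b * (i + 1).choose 2) *
        (1 - X ^ ((2 * i + 1) * a)) =
      (∑ i ∈ Finset.range L, (-1 : ℤ⟦X⟧) ^ i * X ^ (a * i.choose 2 + b * (i + 1).choose 2) *
        (gb p (2 * L) (L - i) * qfac p L - 1)) +
      (-1 : ℤ⟦X⟧) ^ L * X ^ (a * L.choose 2 + b * (L + 1).choose 2) * gb p (2 * L) (L - L) *
        qfac p L -
      (∑ i ∈ Finset.range L, (-1 : ℤ⟦X⟧) ^ i * X ^ (a * (i + 2).choose 2 + b * (i + 1).choose 2) *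
        (gb p (2 * L) (L + 1 + i) * qfac p L - 1)) := by
    rw [finite_jtp hp, Finset.sum_range_succ, sub_mul, add_mul, Finset.sum_mul, Finset.sum_mul]
    have e : ∀ i : ℕ, (X : ℤ⟦X⟧) ^ (a * (i + 2).choose 2 + b * (i + 1).choose 2) =
        X ^ (a * i.choose 2 + b * (i + 1).choose 2) * X ^ ((2 * i + 1) * a) := by
      intro i
      rw [← pow_add, choose_two_succ (i + 1), choose_two_succ i]
      ring_nf
    simp only [e, mul_sub, Finset.sum_sub_distrib, mul_one, mul_assoc]
    ring
  rw [hsplit]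
  have hp1 : 1 ≤ p := by omega
  refine dvd_sub (dvd_add (Finset.dvd_sum fun i hi => ?_) ?_) (Finset.dvd_sum fun i hi => ?_)
  · have hi := Finset.mem_range.1 hi
    have h1 : (X : ℤ⟦X⟧) ^ i ∣ (-1) ^ i * X ^ (a * i.choose 2 + b * (i + 1).choose 2) :=
      Dvd.dvd.mul_left (pow_dvd_pow _ (by nlinarith [le_choose_two_succ i])) _
    have h2 := dvd_gb_sub (d := L - i) (L := L) (M := 2 * L) (j := L - i) hp1 (by omega) (by omega)
      (by omega) (by omega)
    have := mul_dvd_mul h1 h2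
    rwa [← pow_add, show i + (L - i) = L by omega] at this
  · refine Dvd.dvd.mul_right (Dvd.dvd.mul_right (Dvd.dvd.mul_left (pow_dvd_pow _ ?_) _) _) _
    nlinarith [le_choose_two_succ L]
  · have hi := Finset.mem_range.1 hi
    have h1 : (X : ℤ⟦X⟧) ^ (i + 1) ∣
        (-1) ^ i * X ^ (a * (i + 2).choose 2 + b * (i + 1).choose 2) :=
      Dvd.dvd.mul_left (pow_dvd_pow _ (by nlinarith [le_choose_two_succ (i + 1)])) _
    have h2 := dvd_gb_sub (d := L - (i + 1)) (L := L) (M := 2 * L) (j := L + 1 + i) hp1 (by omega)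
      (by omega) (by omega) (by omega)
    have := mul_dvd_mul h1 h2
    rwa [← pow_add, show i + 1 + (L - (i + 1)) = L by omega] at this

/-! ### The series solving the Gordon recurrence -/

/-- The quotient `(q)_{N+n} / (q)_n`, as a product. -/
noncomputable def rfac (N n : ℕ) : ℤ⟦X⟧ := ∏ j ∈ Finset.range N, (1 - X ^ (n + j + 1))

theorem rfac_succ (N n : ℕ) : rfac (N + 1) n = rfac N n * (1 - X ^ (N + n + 1)) := by
  rw [rfac, Finset.prod_range_succ, ← rfac, add_comm n N]

theorem rfac_succ' (N n : ℕ) : rfac (N + 1) n = rfac N (n + 1) * (1 - X ^ (n + 1)) := by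
  rw [rfac, Finset.prod_range_succ', rfac]
  congr 1
  refine Finset.prod_congr rfl fun j _ => ?_
  rw [show n + (j + 1) + 1 = n + 1 + j + 1 by ring]

theorem rfac_zero_right (N : ℕ) : rfac N 0 = qfac 1 N := by
  simp [rfac, qfac]

/-- The `n`-th term of Andrews's series `J_{k,a}(x; q)` at `x = q ^ N`, multiplied by `(q)_∞`.
The factor `1 / ((q)_n (x q ^ (n+1))_∞)` of that term becomes `rfac N n`, and the exponent of the
monomial is `k N n + (2k+1) n(n+1)/2 - a n`. The subtraction `k - a` is only meant for `a ≤ k`. -/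
noncomputable def summand (k N a n : ℕ) : ℤ⟦X⟧ :=
  (-1) ^ n * X ^ (k * (N + n) * n + (n + 1).choose 2 + (k - a) * n) *
    (1 - X ^ ((N + 2 * n + 1) * a)) * rfac N n

/-- The recurrence `S_{N,a+1} = S_{N,a} + q ^ ((N+1)a) S_{N+1,k-a}`. Termwise it holds up to a
telescoping difference `u n - u (n + 1)`. -/
theorem sum_summand_succ {k a : ℕ} (ha : a < k) (N L : ℕ) :
    (X : ℤ⟦X⟧) ^ L ∣ ∑ n ∈ Finset.range L, summand k N (a + 1) n -
      (∑ n ∈ Finset.range L, summand k N a n +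
        X ^ ((N + 1) * a) * ∑ n ∈ Finset.range L, summand k (N + 1) (k - a) n) := by
  obtain ⟨b, rfl⟩ : ∃ b, k = a + 1 + b := ⟨k - (a + 1), by omega⟩
  set k := a + 1 + b with hk
  let u : ℕ → ℤ⟦X⟧ := fun n => (-1) ^ n * X ^ (k * (N + n) * n + (n + 1).choose 2 + b * n) *
    (1 - X ^ n) * rfac N n
  have key : ∀ n, summand k N (a + 1) n -
      (summand k N a n + X ^ ((N + 1) * a) * summand k (N + 1) (k - a) n) = u n - u (n + 1) := by
    intro n
    have e1 : k - (a + 1) = b := by omega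
    have e2 : k - a = b + 1 := by omega
    have e3 : k - (b + 1) = a := by omega
    simp only [summand, u, e2, e1, e3]
    have h3 : rfac N (n + 1) * (1 - X ^ (n + 1)) = rfac (N + 1) n := (rfac_succ' N n).symm
    rw [mul_assoc _ (1 - X ^ (n + 1)), mul_comm (1 - X ^ (n + 1)), h3, rfac_succ,
      choose_two_succ (n + 1), hk]
    ring
  rw [Finset.mul_sum, ← Finset.sum_add_distrib, ← Finset.sum_sub_distrib,
    Finset.sum_congr rfl fun n _ => key n, Finset.sum_range_sub']
  have hu0 : u 0 = 0 := by simp [u]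
  rw [hu0, zero_sub, dvd_neg]
  refine Dvd.dvd.mul_right (Dvd.dvd.mul_right (Dvd.dvd.mul_left (pow_dvd_pow _ ?_) _) _) _
  have := le_choose_two_succ L
  omega

theorem sum_summand_zero (k N L : ℕ) : ∑ n ∈ Finset.range L, summand k N 0 n = 0 := by
  simp [summand]

theorem sum_summand_large {k a N L : ℕ} (ha : 1 ≤ a) (hk : 1 ≤ k) (hN : L ≤ N) :
    (X : ℤ⟦X⟧) ^ L ∣ ∑ n ∈ Finset.range L, summand k N a n - qfac 1 N := by
  cases L with
  | zero => simp
  | succ L =>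
    rw [Finset.sum_range_succ', add_sub_assoc]
    refine dvd_add (Finset.dvd_sum fun n _ => ?_) ?_
    · refine Dvd.dvd.mul_right (Dvd.dvd.mul_right (Dvd.dvd.mul_left (pow_dvd_pow _ ?_) _) _) _
      have : 1 * (N + (n + 1)) * 1 ≤ k * (N + (n + 1)) * (n + 1) := by gcongr; omega
      omega
    · have : summand k N a 0 - qfac 1 N = - (X ^ ((N + 1) * a) * qfac 1 N) := by
        simp [summand, rfac_zero_right]
        ring
      rw [this, dvd_neg]
      exact Dvd.dvd.mul_right (pow_dvd_pow _ (by nlinarith)) _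

/-- Uniqueness for the Gordon recurrence: a solution `F` normalised by `F N a ≡ 1` modulo `X ^ N`
for `a ≥ 1` agrees modulo `X ^ L` with the explicit series divided by `(q)_∞`. The induction on
`d` descends from `N = M`, where the normalisation decides everything modulo `X ^ L`. -/
theorem eq_sum_summand {k L M : ℕ} (hM : L ≤ M) (F : ℕ → ℕ → ℤ⟦X⟧) (h0 : ∀ N, F N 0 = 0)
    (hs : ∀ N a, a < k → F N (a + 1) = F N a + X ^ ((N + 1) * a) * F (N + 1) (k - a))
    (hl : ∀ N a, 1 ≤ a → a ≤ k → X ^ N ∣ F N a - 1) :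
    ∀ d N, N + d = M → ∀ a, a ≤ k →
      X ^ L ∣ F N a * qfac 1 M - ∑ n ∈ Finset.range L, summand k N a n := by
  intro d
  induction d with
  | zero =>
    rintro N rfl a ha
    rcases Nat.eq_zero_or_pos a with rfl | ha1
    · rw [sum_summand_zero, h0]; simp
    · have h1 := (pow_dvd_pow X hM).trans (hl N a ha1 ha)
      have h2 := sum_summand_large ha1 (le_trans ha1 ha) hM
      have := dvd_sub (h1.mul_right (qfac 1 N)) h2
      convert this using 1
      simp only [add_zero]
      ring
  | succ d ih =>
    intro N hN a
    induction a with
    | zero => intro _; rw [sum_summand_zero, h0]; simp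
    | succ a iha =>
      intro ha
      have h1 := iha (by omega)
      have h2 := ih (N + 1) (by omega) (k - a) (by omega)
      have h3 := sum_summand_succ (show a < k by omega) N L
      have := dvd_sub (dvd_add h1 (h2.mul_left (X ^ ((N + 1) * a)))) h3
      convert this using 1
      rw [hs N a (by omega)]
      ring

/-! ### Generating functions of classes of multisets -/

/-- The generating function by sum of the multisets of naturals satisfying `P`. It is meaningful
when `P` forbids the part `0`; otherwise the sets counted may be infinite and `ncard` is `0`. -/
noncomputable def gf (P : Multiset ℕ → Prop) : ℤ⟦X⟧ :=
  PowerSeries.mk fun m => (({s : Multiset ℕ | s.sum = m ∧ P s}.ncard : ℕ) : ℤ)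

theorem finite_sum_eq {P : Multiset ℕ → Prop} (hP : ∀ s, P s → 0 ∉ s) (m : ℕ) :
    {s : Multiset ℕ | s.sum = m ∧ P s}.Finite := by
  refine (Set.finite_range (fun p : Nat.Partition m => p.parts)).subset ?_
  rintro s ⟨h1, h2⟩
  exact ⟨⟨s, fun {i} hi => Nat.pos_of_ne_zero fun h => hP s h2 (h ▸ hi), h1⟩, rfl⟩

/-- If the class `P` is the disjoint union of `A` and of the translates `t + c` of the members
`t` of `B`, the generating functions add up accordingly. -/
theorem gf_split {P A B : Multiset ℕ → Prop} {c : Multiset ℕ} (hP : ∀ s, P s → 0 ∉ s)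
    (h : ∀ s, P s ↔ A s ∨ ∃ t, B t ∧ s = t + c) (hd : ∀ t, B t → ¬ A (t + c)) :
    gf P = gf A + X ^ c.sum * gf B := by
  ext m
  rw [map_add, PowerSeries.coeff_X_pow_mul']
  simp only [gf, PowerSeries.coeff_mk]
  have hA : {s : Multiset ℕ | s.sum = m ∧ A s}.Finite :=
    finite_sum_eq (fun s hs => hP s ((h s).2 (Or.inl hs))) m
  split_ifs with hm
  · have e : {s : Multiset ℕ | s.sum = m ∧ P s} = {s | s.sum = m ∧ A s} ∪
        (fun t => t + c) '' {t | t.sum = m - c.sum ∧ B t} := by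
      ext s
      simp only [Set.mem_ofPred_eq, Set.mem_union, Set.mem_image, h]
      constructor
      · rintro ⟨h1, h2 | ⟨t, h2, rfl⟩⟩
        · exact Or.inl ⟨h1, h2⟩
        · refine Or.inr ⟨t, ⟨?_, h2⟩, rfl⟩
          rw [Multiset.sum_add] at h1; omega
      · rintro (⟨h1, h2⟩ | ⟨t, ⟨h1, h2⟩, rfl⟩)
        · exact ⟨h1, Or.inl h2⟩
        · refine ⟨?_, Or.inr ⟨t, h2, rfl⟩⟩
          rw [Multiset.sum_add]; omega
    have hB : ((fun t => t + c) '' {t | t.sum = m - c.sum ∧ B t}).Finite :=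
      (finite_sum_eq hP m).subset (e ▸ Set.subset_union_right)
    rw [e, Set.ncard_union_eq _ hA hB, Set.ncard_image_of_injective _ (add_left_injective c)]
    · push_cast; rfl
    · rw [Set.disjoint_left]
      rintro _ ⟨_, h1⟩ ⟨t, ⟨_, h2⟩, rfl⟩
      exact hd t h2 h1
  · have e : {s : Multiset ℕ | s.sum = m ∧ P s} = {s | s.sum = m ∧ A s} := by
      ext s
      simp only [Set.mem_ofPred_eq, h]
      refine and_congr_right fun h1 => ⟨?_, Or.inl⟩
      rintro (h2 | ⟨t, h2, rfl⟩)
      · exact h2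
      · rw [Multiset.sum_add] at h1; omega
    rw [e]; simp

theorem dvd_gf_sub_one {P : Multiset ℕ → Prop} {L : ℕ} (h0 : P 0)
    (h : ∀ s, P s → s ≠ 0 → L ≤ s.sum) : X ^ L ∣ gf P - 1 := by
  rw [PowerSeries.X_pow_dvd_iff]
  intro m hm
  rw [map_sub, gf, PowerSeries.coeff_mk, PowerSeries.coeff_one]
  have e : {s : Multiset ℕ | s.sum = m ∧ P s} = if m = 0 then {0} else ∅ := by
    ext s
    by_cases hs : s = 0
    · subst hs
      split_ifs with h1
      · simp [h1, h0]
      · simp [Ne.symm h1]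
    · have h2 : ¬ (s.sum = m ∧ P s) := fun ⟨h1, h2⟩ => by have := h s h2 hs; omega
      simp only [Set.mem_ofPred_eq, h2, false_iff]
      split_ifs <;> simp [hs]
  rw [e]
  split_ifs <;> simp


/-- The multisets with all parts greater than `N`, with `f_j + f_{j+1} ≤ k - 1` for the
multiplicities `f`, and with fewer than `a` copies of `N + 1`. -/
def Gor (k N a : ℕ) (s : Multiset ℕ) : Prop :=
  (∀ x ∈ s, N < x) ∧ (∀ j, s.count j + s.count (j + 1) ≤ k - 1) ∧ s.count (N + 1) < a

theorem gf_gor_zero (k N : ℕ) : gf (Gor k N 0) = 0 := by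
  ext m
  simp [gf, Gor]

/-- A member of `Gor k N (a + 1)` with exactly `a` copies of `N + 1` has at most `k - 1 - a` copies
of `N + 2`, so removing the copies of `N + 1` leaves a member of `Gor k (N + 1) (k - a)`. -/
theorem gor_succ {k N a : ℕ} (ha : a < k) (s : Multiset ℕ) :
    Gor k N (a + 1) s ↔ Gor k N a s ∨
      ∃ t, Gor k (N + 1) (k - a) t ∧ s = t + Multiset.replicate a (N + 1) := by
  constructor
  · rintro ⟨h1, h2, h3⟩
    by_cases h : s.count (N + 1) < a
    · exact Or.inl ⟨h1, h2, h⟩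
    · have hc : s.count (N + 1) = a := by omega
      refine Or.inr ⟨s.filter (fun x => x ≠ N + 1), ⟨?_, ?_, ?_⟩, ?_⟩
      · intro x hx
        rw [Multiset.mem_filter] at hx
        have := h1 x hx.1
        omega
      · intro j
        exact le_trans (add_le_add (Multiset.count_le_of_le _ (Multiset.filter_le _ _))
          (Multiset.count_le_of_le _ (Multiset.filter_le _ _))) (h2 j)
      · have := h2 (N + 1)
        rw [Multiset.count_filter_of_pos (by omega)]
        omega
      · ext x
        rw [Multiset.count_add, Multiset.count_filter, Multiset.count_replicate]
        split_ifs with h4 h5 h5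
        · omega
        · rfl
        · subst h5; omega
        · omega
  · rintro (⟨h1, h2, h3⟩ | ⟨t, ⟨h1, h2, h3⟩, rfl⟩)
    · exact ⟨h1, h2, by omega⟩
    · have h0 : ∀ j, j ≤ N + 1 → t.count j = 0 := fun j hj =>
        Multiset.count_eq_zero.2 fun h => by have := h1 j h; omega
      refine ⟨?_, ?_, ?_⟩
      · intro x hx
        rw [Multiset.mem_add] at hx
        rcases hx with hx | hx
        · have := h1 x hx; omega
        · have := Multiset.eq_of_mem_replicate hx; omega
      · intro j
        rw [Multiset.count_add, Multiset.count_add, Multiset.count_replicate,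
          Multiset.count_replicate]
        rcases lt_trichotomy j (N + 1) with h | rfl | h
        · have := h0 j (by omega)
          have := h0 (j + 1) (by omega)
          split_ifs <;> omega
        · have := h0 (N + 1) le_rfl
          split_ifs <;> omega
        · have := h2 j
          split_ifs <;> omega
      · rw [Multiset.count_add, Multiset.count_replicate_self, h0 _ le_rfl]
        omega

theorem gf_gor_succ {k N a : ℕ} (ha : a < k) :
    gf (Gor k N (a + 1)) =
      gf (Gor k N a) + X ^ ((N + 1) * a) * gf (Gor k (N + 1) (k - a)) := by
  have h := gf_split (fun s hs h => absurd (hs.1 0 h) (by omega)) (gor_succ (N := N) ha) (by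
    rintro t ⟨h1, -, -⟩ ⟨-, -, h3⟩
    rw [Multiset.count_add, Multiset.count_replicate_self] at h3
    omega)
  rw [h, Multiset.sum_replicate, smul_eq_mul, mul_comm a]

theorem le_sum_of_forall_lt {N : ℕ} {s : Multiset ℕ} (h : ∀ x ∈ s, N < x) (hs : s ≠ 0) :
    N ≤ s.sum := by
  obtain ⟨x, hx⟩ := Multiset.exists_mem_of_ne_zero hs
  exact (h x hx).le.trans (Multiset.le_sum_of_mem hx)

theorem dvd_gf_gor_sub_one {k N a : ℕ} (ha : 1 ≤ a) : X ^ N ∣ gf (Gor k N a) - 1 :=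
  dvd_gf_sub_one ⟨by simp, by simp, by simpa using Nat.lt_of_lt_of_le Nat.zero_lt_one ha⟩
    fun _ hs h => le_sum_of_forall_lt hs.1 h

/-! ### The product side -/

/-- The multisets with all parts greater than `N` and satisfying `ok`. -/
def PartsIn (ok : ℕ → Prop) (N : ℕ) (s : Multiset ℕ) : Prop :=
  (∀ x ∈ s, N < x) ∧ ∀ x ∈ s, ok x

open Classical in
/-- Euler's product, one factor at a time: either `N + 1` is absent, or one copy of it can be
removed. -/
theorem gf_partsIn_mul (ok : ℕ → Prop) (M : ℕ) :
    gf (PartsIn ok 0) * ∏ j ∈ Finset.range M, (if ok (j + 1) then 1 - X ^ (j + 1) else 1) =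
      gf (PartsIn ok M) := by
  induction M with
  | zero => simp
  | succ N ih =>
    rw [Finset.prod_range_succ, ← mul_assoc, ih]
    split_ifs with h
    · have := gf_split (P := PartsIn ok N) (A := PartsIn ok (N + 1)) (B := PartsIn ok N)
        (c := {N + 1}) (fun s hs h => absurd (hs.1 0 h) (by omega)) (by
        intro s
        constructor
        · rintro ⟨h1, h2⟩
          by_cases hs : N + 1 ∈ s
          · obtain ⟨t, rfl⟩ := Multiset.exists_cons_of_mem hs
            refine Or.inr ⟨t, ⟨fun x hx => h1 x (Multiset.mem_cons_of_mem hx),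
              fun x hx => h2 x (Multiset.mem_cons_of_mem hx)⟩, ?_⟩
            rw [add_comm t, Multiset.singleton_add]
          · refine Or.inl ⟨fun x hx => ?_, h2⟩
            have := h1 x hx
            have : x ≠ N + 1 := fun h => hs (h ▸ hx)
            omega
        · rintro (⟨h1, h2⟩ | ⟨t, ⟨h1, h2⟩, rfl⟩)
          · exact ⟨fun x hx => (Nat.lt_succ_self N).trans (h1 x hx), h2⟩
          · constructor
            · intro x hx
              rw [Multiset.mem_add, Multiset.mem_singleton] at hx
              rcases hx with hx | rfl
              · exact h1 x hx
              · omega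
            · intro x hx
              rw [Multiset.mem_add, Multiset.mem_singleton] at hx
              rcases hx with hx | rfl
              · exact h2 x hx
              · exact h) (by
        rintro t - ⟨h1, -⟩
        have := h1 (N + 1) (by simp)
        omega)
      rw [Multiset.sum_singleton] at this
      linear_combination this
    · rw [mul_one]
      congr 1
      funext s
      refine propext ⟨?_, ?_⟩
      · rintro ⟨h1, h2⟩
        refine ⟨fun x hx => ?_, h2⟩
        have := h1 x hx
        have : x ≠ N + 1 := fun e => h (e ▸ h2 x hx)
        omega
      · rintro ⟨h1, h2⟩
        exact ⟨fun x hx => (Nat.lt_succ_self N).trans (h1 x hx), h2⟩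

/-- The residue condition of the product side: `x` is not `0` or `±a` modulo `2k + 1`. The
subtraction is only meant for `a ≤ 2k + 1`. -/
def Ok (k a x : ℕ) : Prop :=
  ¬ x ≡ 0 [MOD 2 * k + 1] ∧ ¬ x ≡ a [MOD 2 * k + 1] ∧ ¬ x ≡ (2 * k + 1 - a) [MOD 2 * k + 1]

theorem not_ok_iff {k a b c r : ℕ} (hab : a + b = 2 * k + 1) (ha : 1 ≤ a) (hb : 1 ≤ b)
    (hr : r < 2 * k + 1) :
    ¬ Ok k a ((2 * k + 1) * c + r + 1) ↔ r = a - 1 ∨ r = b - 1 ∨ r = 2 * k := by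
  have hb' : 2 * k + 1 - a = b := by omega
  have e : (2 * k + 1) * c + r + 1 ≡ r + 1 [MOD 2 * k + 1] := by
    rw [add_assoc]
    simp [Nat.ModEq]
  have hc : ∀ y, (2 * k + 1) * c + r + 1 ≡ y [MOD 2 * k + 1] ↔ r + 1 ≡ y [MOD 2 * k + 1] :=
    fun y => ⟨fun h => e.symm.trans h, fun h => e.trans h⟩
  rw [Ok, hb']
  simp only [hc]
  simp only [Nat.ModEq, Nat.zero_mod]
  rw [Nat.mod_eq_of_lt (by omega : a < 2 * k + 1), Nat.mod_eq_of_lt (by omega : b < 2 * k + 1)]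
  rcases (by omega : r + 1 < 2 * k + 1 ∨ r + 1 = 2 * k + 1) with h | h
  · rw [Nat.mod_eq_of_lt h]
    omega
  · rw [h, Nat.mod_self]
    omega

open Classical in
/-- The factors `1 - X ^ x` for the excluded `x ≤ (2k+1)L` form the triple product. -/
theorem prod_not_ok {k a b : ℕ} (hab : a + b = 2 * k + 1) (ha : 1 ≤ a) (hak : a ≤ k) (L : ℕ) :
    ∏ j ∈ Finset.range ((2 * k + 1) * L), (if Ok k a (j + 1) then 1 else 1 - (X : ℤ⟦X⟧) ^ (j + 1)) =
      (∏ i ∈ Finset.range L, ((1 - X ^ ((2 * k + 1) * i + a)) * (1 - X ^ ((2 * k + 1) * i + b)))) *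
        qfac (2 * k + 1) L := by
  induction L with
  | zero => simp [qfac]
  | succ L ih =>
    rw [mul_add, mul_one, Finset.prod_range_add, ih]
    have h : ∏ r ∈ Finset.range (2 * k + 1), (if Ok k a ((2 * k + 1) * L + r + 1) then 1
        else 1 - (X : ℤ⟦X⟧) ^ ((2 * k + 1) * L + r + 1)) =
        ∏ r ∈ ({a - 1, b - 1, 2 * k} : Finset ℕ), (1 - (X : ℤ⟦X⟧) ^ ((2 * k + 1) * L + r + 1)) := by
      symm
      have hg : ∀ r ∈ ({a - 1, b - 1, 2 * k} : Finset ℕ),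
          1 - (X : ℤ⟦X⟧) ^ ((2 * k + 1) * L + r + 1) = if Ok k a ((2 * k + 1) * L + r + 1) then 1
            else 1 - (X : ℤ⟦X⟧) ^ ((2 * k + 1) * L + r + 1) := by
        intro r hr
        simp only [Finset.mem_insert, Finset.mem_singleton] at hr
        rw [if_neg]
        exact (not_ok_iff hab ha (by omega) (by omega)).2 hr
      rw [Finset.prod_congr rfl hg]
      apply Finset.prod_subset
      · intro r hr
        simp only [Finset.mem_insert, Finset.mem_singleton] at hr
        rw [Finset.mem_range]
        omega
      · intro r hr hr'
        simp only [Finset.mem_insert, Finset.mem_singleton] at hr'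
        rw [Finset.mem_range] at hr
        rw [if_pos]
        by_contra h
        exact hr' ((not_ok_iff hab ha (by omega) hr).1 h)
    rw [h, Finset.prod_insert, Finset.prod_insert, Finset.prod_singleton, Finset.prod_range_succ,
      qfac, qfac, Finset.prod_range_succ, ← qfac]
    · rw [show (2 * k + 1) * L + (a - 1) + 1 = (2 * k + 1) * L + a by omega,
        show (2 * k + 1) * L + (b - 1) + 1 = (2 * k + 1) * L + b by omega]
      ring
    · simp only [Finset.mem_singleton]; omega
    · simp only [Finset.mem_insert, Finset.mem_singleton]; omega

/-- Both generating functions have the same coefficient of `X ^ m`: modulo `X ^ (m+1)`, both become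
the triple product `J` after multiplication by `∏ (1 - X ^ j) = W * J`, where `W` collects the
allowed and `J` the excluded `j`. -/
theorem gf_eq {k a : ℕ} (ha : 1 ≤ a) (hak : a ≤ k) :
    gf (PartsIn (Ok k a) 0) = gf (Gor k 0 a) := by
  classical
  obtain ⟨b, hab⟩ : ∃ b, a + b = 2 * k + 1 := ⟨2 * k + 1 - a, by omega⟩
  ext m
  set L := m + 1 with hL
  set M := (2 * k + 1) * L with hM
  have hLM : L ≤ M := by nlinarith
  set F := gf (Gor k 0 a)
  set G := gf (PartsIn (Ok k a) 0)
  set S := ∑ n ∈ Finset.range L, summand k 0 a n with hS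
  have h1 : X ^ L ∣ F * qfac 1 M - S :=
    eq_sum_summand hLM (fun N a => gf (Gor k N a)) (gf_gor_zero k) (fun N a h => gf_gor_succ h)
      (fun N a h _ => dvd_gf_gor_sub_one h) M 0 (by omega) a hak
  set J := ∏ j ∈ Finset.range M, (if Ok k a (j + 1) then 1 else 1 - (X : ℤ⟦X⟧) ^ (j + 1)) with hJ
  set W := ∏ j ∈ Finset.range M, (if Ok k a (j + 1) then 1 - (X : ℤ⟦X⟧) ^ (j + 1) else 1) with hW
  have h2 : X ^ L ∣ J - S := by
    have := jtp hab ha (by omega) L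
    rw [← prod_not_ok hab ha hak L] at this
    convert this using 2
    refine Finset.sum_congr rfl fun n _ => ?_
    have hr : rfac 0 n = 1 := by simp [rfac]
    rw [summand, hr, mul_one, zero_add, zero_add]
    congr 3
    have hC : 2 * n.choose 2 + n = n * n := by
      clear * -
      induction n with
      | zero => rfl
      | succ n ih => rw [choose_two_succ]; linarith
    obtain ⟨d, rfl⟩ : ∃ d, k = a + d := ⟨k - a, by omega⟩
    have hb : b = a + 2 * d + 1 := by omega
    rw [hb, choose_two_succ, Nat.add_sub_cancel_left]
    clear * - hC
    zify at *
    linear_combination (-(a + d : ℤ)) * hC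
  have h3 : W * J = qfac 1 M := by
    rw [hJ, hW, ← Finset.prod_mul_distrib, qfac]
    refine Finset.prod_congr rfl fun j _ => ?_
    split_ifs <;> simp
  have h4 : X ^ L ∣ G * W - 1 := by
    rw [gf_partsIn_mul]
    exact (pow_dvd_pow X hLM).trans
      (dvd_gf_sub_one ⟨by simp, by simp⟩ fun _ hs h => le_sum_of_forall_lt hs.1 h)
  have h5 : X ^ L ∣ F - G := by
    refine dvd_of_dvd_mul (u := W * J) ?_ ?_
    · rw [h3]; exact constantCoeff_qfac le_rfl _
    · have := dvd_sub (dvd_sub h1 h2) (h4.mul_right J)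
      convert this using 1
      rw [← h3]
      ring
  have := PowerSeries.X_pow_dvd_iff.1 h5 m (by omega)
  rw [map_sub, sub_eq_zero] at this
  exact this.symm

/-! ### Translation to partitions -/

theorem card_partition (m : ℕ) (P : Multiset ℕ → Prop) (Q : Nat.Partition m → Prop)
    (hP : ∀ s, P s → 0 ∉ s) (h : ∀ p, Q p ↔ P p.parts) :
    ((Nat.card {p : Nat.Partition m // Q p} : ℕ) : ℤ) = PowerSeries.coeff m (gf P) := by
  rw [gf, PowerSeries.coeff_mk]
  congr 1
  rw [← Nat.card_coe_set_eq]
  refine Nat.card_congr ⟨fun p => ⟨p.1.parts, p.1.parts_sum, (h _).1 p.2⟩,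
    fun s => ⟨⟨s.1, fun {i} hi => Nat.pos_of_ne_zero fun e => hP _ s.2.2 (e ▸ hi), s.2.1⟩,
      (h _).2 s.2.2⟩, fun _ => rfl, fun _ => rfl⟩

/-- Difference at least `2` at distance `k - 1` says that no `k` parts lie in `{j, j + 1}`. -/
theorem diff_iff {k m : ℕ} (hk : 2 ≤ k) (p : Nat.Partition m) :
    Diff2AtDist (k - 1) p ↔ ∀ j, p.parts.count j + p.parts.count (j + 1) ≤ k - 1 := by
  rw [Diff2AtDist]
  set l := p.parts.sort (· ≤ ·) with hl
  have hcount : ∀ j, p.parts.count j = l.count j := fun j => by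
    rw [← Multiset.coe_count, hl, Multiset.sort_eq]
  have hsort : l.SortedLE := by
    rw [hl]; exact (Multiset.pairwise_sort _ _).sortedLE
  have hmono : ∀ i j (hj : j < l.length) (hij : i ≤ j), l[i] ≤ l[j] := fun i j hj hij =>
    hsort.getElem_le_getElem_of_le hij
  have hsum : ∀ (l : List ℕ) j, l.count j + l.count (j + 1) =
      (l.filter (fun x => x = j ∨ x = j + 1)).length := by
    intro l j
    induction l with
    | nil => rfl
    | cons x l ih =>
      simp only [Bool.decide_or] at ih ⊢
      rw [List.count_cons, List.count_cons, List.filter_cons]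
      by_cases h1 : x = j
      · subst h1; simp; omega
      · by_cases h2 : x = j + 1
        · subst h2; simp; omega
        · simp [h1, h2]; omega
  simp only [hcount, hsum]
  constructor
  · intro h j
    by_contra! hlt
    -- The parts equal to `j` or `j + 1` form a sublist `f`; as `φ` is strictly monotone, its entries
    -- `0` and `k - 1` sit at distance at least `k - 1` in the sorted list, yet differ by at most `1`.
    set f := l.filter (fun x => x = j ∨ x = j + 1) with hf
    obtain ⟨φ, hφ⟩ : ∃ φ : Fin f.length ↪o Fin l.length, ∀ ix, f.get ix = l.get (φ ix) :=
      List.sublist_iff_exists_fin_orderEmbedding_get_eq.1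
      (List.filter_sublist (p := fun x => decide (x = j ∨ x = j + 1)) (l := l))
    have hmem : ∀ i : Fin f.length, f.get i = j ∨ f.get i = j + 1 := fun i => by
      have := (List.mem_filter.1 (List.get_mem f i)).2
      simpa using this
    have hadd : ∀ n (hn : n < f.length), (φ ⟨0, by omega⟩ : ℕ) + n ≤ φ ⟨n, hn⟩ := by
      intro n
      induction n with
      | zero => intro hn; simp
      | succ n ih =>
        intro hn
        have h1 := ih (by omega)
        have h2 : φ ⟨n, by omega⟩ < φ ⟨n + 1, hn⟩ := φ.lt_iff_lt.2 (by simp)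
        have h3 : (φ ⟨n, by omega⟩ : ℕ) < φ ⟨n + 1, hn⟩ := h2
        omega
    have h1 := hadd (k - 1) hlt
    have h2 := (φ ⟨k - 1, hlt⟩).2
    have h3 := h (φ ⟨0, by omega⟩) (by omega)
    rw [List.getD_eq_getElem _ _ (by omega), List.getD_eq_getElem _ _ (by omega)] at h3
    have h4 := hmono _ _ h2 h1
    have h5 := hφ ⟨0, by omega⟩
    have h6 := hφ ⟨k - 1, hlt⟩
    have h7 := hmem ⟨0, by omega⟩
    have h8 := hmem ⟨k - 1, hlt⟩
    simp only [List.get_eq_getElem] at h5 h6 h7 h8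
    omega
  · intro h s hs
    by_contra! hlt
    rw [List.getD_eq_getElem _ _ hs, List.getD_eq_getElem _ _ (by omega)] at hlt
    -- The `k` consecutive parts from position `s` on all lie in `{l[s], l[s] + 1}`.
    have h1 := h l[s]
    have hsub : ((l.drop s).take k).Sublist l :=
      (List.take_sublist _ _).trans (List.drop_sublist _ _)
    have h2 := (hsub.filter (fun x => decide (x = l[s] ∨ x = l[s] + 1))).length_le
    rw [List.filter_eq_self.2] at h2
    · rw [List.length_take, List.length_drop] at h2
      omega
    · intro x hx
      obtain ⟨i, hi, rfl⟩ := List.getElem_of_mem hx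
      rw [List.length_take, List.length_drop] at hi
      rw [List.getElem_take, List.getElem_drop]
      have h3 := hmono s (s + i) (by omega) (by omega)
      have h4 := hmono (s + i) (s + (k - 1)) hs (by omega)
      simp only [decide_eq_true_eq]
      omega

end Gordon

/-- Gordon's identities: for `k ≥ 2`, `1 ≤ i ≤ k` and `m ≥ 0`, the number of partitions
of `m` with all parts incongruent to `0, ±(k+1-i)` modulo `2k+1` equals the number of
partitions of `m` with difference at least 2 at distance `k-1` and at most `k-i` parts
equal to `1`. -/
theorem gordon_identities (k i m : ℕ) (hk : 2 ≤ k) (hi1 : 1 ≤ i) (hik : i ≤ k) :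
    Nat.card {p : Nat.Partition m //
      ∀ x ∈ p.parts, ¬ x ≡ 0 [MOD 2 * k + 1] ∧ ¬ x ≡ (k + 1 - i) [MOD 2 * k + 1] ∧
        ¬ x ≡ (k + i) [MOD 2 * k + 1]} =
    Nat.card {p : Nat.Partition m //
      Diff2AtDist (k - 1) p ∧ p.parts.count 1 ≤ k - i} := by
  have e : 2 * k + 1 - (k + 1 - i) = k + i := by omega
  have h1 := Gordon.card_partition m (Gordon.PartsIn (Gordon.Ok k (k + 1 - i)) 0)
    (fun p => ∀ x ∈ p.parts, ¬ x ≡ 0 [MOD 2 * k + 1] ∧ ¬ x ≡ (k + 1 - i) [MOD 2 * k + 1] ∧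
        ¬ x ≡ (k + i) [MOD 2 * k + 1]) (fun s hs h => absurd (hs.1 0 h) (by omega)) (by
      intro p
      rw [Gordon.PartsIn]
      simp only [Gordon.Ok, e]
      exact ⟨fun h => ⟨fun x hx => p.parts_pos hx, h⟩, fun h => h.2⟩)
  have h2 := Gordon.card_partition m (Gordon.Gor k 0 (k + 1 - i))
    (fun p => Diff2AtDist (k - 1) p ∧ p.parts.count 1 ≤ k - i)
    (fun s hs h => absurd (hs.1 0 h) (by omega)) (by
      intro p
      rw [Gordon.Gor, Gordon.diff_iff hk, zero_add]
      exact ⟨fun h => ⟨fun x hx => p.parts_pos hx, h.1, by omega⟩, fun h => ⟨h.2.1, by omega⟩⟩)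
  rw [← Gordon.gf_eq (by omega) (by omega), ← h1] at h2
  exact_mod_cast h2.symm
end

section
/- For every integer k ≥ 2, all integers j ≥ 1 and 1 ≤ i, l ≤ k, and every nonnegative integer m, the coefficient of q^m in the polynomial h^{(j)}_{i,l} (the (i,l) entry of h^{(j)} = A_(1) A_(2) ⋯ A_(j)) equals the number of partitions of m that have difference at least 2 at distance k−1, in which at most k−i parts are equal to 1, whose largest part is at most j, and in which the part j appears exactly l−1 times. -/
/-!
With indices starting at `0`, the entry `(i, l)` of `A_(1) ⋯ A_(j)` is a sum
over paths `i = f₀, f₁, …, f_j = l` in `Fin k`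
with consecutive entries satisfying `f_{x} + f_{x+1} ≤ k - 1`, each weighted by `q^{∑ x f_x}`.
Reading `f_x` as the multiplicity of the part `x`, a path is a multiset of numbers at most `j`
in which `j` occurs `l` times and `count x + count (x+1) ≤ k - 1` for all `x`. The starting index
`f₀ = i` is the multiplicity of the number `0`: it does not affect the sum, and it turns
"at most `k - (i + 1)` ones" into the instance `x = 0` of the general condition, so that the
induction on `j` can start at `j = 0`, where the product is the identity matrix.

Two facts carry the proof: the generating function identity `hMat_eq_sum` for the recursively built
finset `pathMultisets`, whose members are described by `mem_pathMultisets`, and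
`sorted_diff_iff`, which translates the difference condition on the sorted list of parts into
the condition on the multiplicities of consecutive numbers.
-/

/-- The `k × k` matrix `A_(j)` over `ℤ[q]` (rows and columns indexed by `Fin k`,
corresponding to the 1-based indices `p = p₀+1`, `l = l₀+1`): the `(p,l)` entry is
`q^{(l−1)j}` if `p + l ≤ k + 1` and `0` otherwise. -/
noncomputable def A (k j : ℕ) : Matrix (Fin k) (Fin k) (Polynomial ℤ) :=
  fun p l => if (p : ℕ) + 1 + ((l : ℕ) + 1) ≤ k + 1 then Polynomial.X ^ ((l : ℕ) * j) else 0

/-- The matrix `h^{(j)} = A_(1) A_(2) ⋯ A_(j)` (the identity matrix when `j = 0`). -/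
noncomputable def hMat (k j : ℕ) : Matrix (Fin k) (Fin k) (Polynomial ℤ) :=
  ((List.range j).map (fun t => A k (t + 1))).prod

/-- For `i < k`, the multisets `s` of numbers at most `j`, with
exactly `i` zeros and exactly `l` copies of `j`,
such that `count x s + count (x + 1) s ≤ k - 1` for every `x`; built by adding the copies
of the largest number last. -/
def pathMultisets (k i : ℕ) : ℕ → ℕ → Finset (Multiset ℕ)
  | 0, l => if i = l then {Multiset.replicate i 0} else ∅
  | j + 1, l => ((Finset.range k).filter (fun t => t + l + 1 ≤ k)).biUnion
      (fun t => (pathMultisets k i j t).image (· + Multiset.replicate l (j + 1)))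

theorem mem_pathMultisets {k i : ℕ} (hi : i < k) (j : ℕ) :
    ∀ (l : ℕ) (s : Multiset ℕ), s ∈ pathMultisets k i j l ↔
      s.count 0 = i ∧ (∀ x ∈ s, x ≤ j) ∧ s.count j = l ∧
        ∀ x, s.count x + s.count (x + 1) + 1 ≤ k := by
  induction j with
  | zero =>
    intro l s
    rw [pathMultisets]
    constructor
    · intro h
      split_ifs at h with hil
      · rw [Finset.mem_singleton] at h
        subst h hil
        refine ⟨by simp, fun x hx => ?_, by simp, fun x => ?_⟩
        · rw [Multiset.eq_of_mem_replicate hx]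
        · cases x <;> simp [Multiset.count_replicate] <;> omega
      · simp at h
    · rintro ⟨h0, h1, h2, -⟩
      rw [if_pos (h0.symm.trans h2), Finset.mem_singleton, Multiset.eq_replicate]
      have hz : ∀ x ∈ s, x = 0 := fun x hx => Nat.le_zero.1 (h1 x hx)
      refine ⟨?_, hz⟩
      rw [← h0, eq_comm, Multiset.count_eq_card]
      exact fun x hx => (hz x hx).symm
  | succ j ih =>
    intro l s
    simp only [pathMultisets, Finset.mem_biUnion, Finset.mem_filter, Finset.mem_range,
      Finset.mem_image]
    constructor
    · rintro ⟨t, ⟨htk, htl⟩, u, hu, rfl⟩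
      obtain ⟨h0, h1, h2, h3⟩ := (ih t u).1 hu
      have hbig : ∀ x, j < x → u.count x = 0 := fun x hx =>
        Multiset.count_eq_zero.2 fun hm => by have := h1 x hm; omega
      refine ⟨by simp [Multiset.count_replicate, h0], fun x hx => ?_, ?_, fun x => ?_⟩
      · rcases Multiset.mem_add.1 hx with hx | hx
        · exact (h1 x hx).trans (Nat.le_succ j)
        · exact (Multiset.eq_of_mem_replicate hx).le
      · simp [hbig (j + 1) (Nat.lt_succ_self j)]
      · simp only [Multiset.count_add, Multiset.count_replicate]
        have h3x := h3 x
        rcases lt_trichotomy x j with hx | rfl | hx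
        · rw [if_neg (by omega), if_neg (by omega)]
          omega
        · rw [if_neg (by omega), if_pos rfl]
          have := hbig (x + 1) (by omega)
          omega
        · rw [hbig x hx, hbig (x + 1) (by omega), if_neg (by omega : ¬ j + 1 = x + 1)]
          split_ifs <;> omega
    · rintro ⟨h0, h1, h2, h3⟩
      have hjk := h3 j
      refine ⟨s.count j, ⟨by omega, by omega⟩, s.filter (fun x => ¬ x = j + 1), ?_, ?_⟩
      · rw [ih]
        refine ⟨?_, fun x hx => ?_, ?_, fun x => ?_⟩
        · rw [Multiset.count_filter_of_pos (by omega), h0]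
        · rw [Multiset.mem_filter] at hx
          have := h1 x hx.1
          omega
        · rw [Multiset.count_filter_of_pos (by omega)]
        · have a := Multiset.count_le_of_le x (Multiset.filter_le (fun x => ¬ x = j + 1) s)
          have b := Multiset.count_le_of_le (x + 1) (Multiset.filter_le (fun x => ¬ x = j + 1) s)
          have := h3 x
          omega
      · rw [← h2, ← Multiset.filter_eq', add_comm]
        exact Multiset.filter_add_not _ _

theorem hMat_succ (k j : ℕ) : hMat k (j + 1) = hMat k j * A k (j + 1) := by
  simp [hMat, List.range_succ]

theorem hMat_eq_sum (k j : ℕ) (i : Fin k) : ∀ l : Fin k,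
    hMat k j i l = ∑ s ∈ pathMultisets k i j l, (Polynomial.X : Polynomial ℤ) ^ s.sum := by
  induction j with
  | zero =>
    intro l
    by_cases h : i = l
    · subst h
      simp [hMat, pathMultisets]
    · have h' : ¬ (i : ℕ) = l := fun e => h (Fin.ext e)
      simp [hMat, pathMultisets, h, h']
  | succ j ih =>
    intro l
    rw [hMat_succ, Matrix.mul_apply, pathMultisets, Finset.sum_biUnion, Finset.sum_filter,
      ← Fin.sum_univ_eq_sum_range (fun t => if t + (l : ℕ) + 1 ≤ k then
        ∑ s ∈ (pathMultisets k i j t).image (· + Multiset.replicate (l : ℕ) (j + 1)),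
          (Polynomial.X : Polynomial ℤ) ^ s.sum else 0)]
    · refine Finset.sum_congr rfl fun t _ => ?_
      rw [A, ih]
      by_cases h : (t : ℕ) + l + 1 ≤ k
      · rw [if_pos (by omega), if_pos h,
          Finset.sum_image fun a _ b _ hab => add_right_cancel hab, Finset.sum_mul]
        refine Finset.sum_congr rfl fun s _ => ?_
        rw [Multiset.sum_add, Multiset.sum_replicate, pow_add, smul_eq_mul]
      · rw [if_neg (by omega), if_neg h, mul_zero]
    · -- The multiplicity of `j` recovers the index `t`.
      intro t _ t' _ hne
      refine Finset.disjoint_left.2 fun s hs hs' => hne ?_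
      obtain ⟨u, hu, rfl⟩ := Finset.mem_image.1 hs
      obtain ⟨v, hv, huv⟩ := Finset.mem_image.1 hs'
      obtain rfl : v = u := add_right_cancel huv
      exact ((mem_pathMultisets i.2 j t v).1 hu).2.2.1.symm.trans
        ((mem_pathMultisets i.2 j t' v).1 hv).2.2.1

theorem countP_consecutive (x : ℕ) (L : List ℕ) :
    L.countP (fun y => y = x ∨ y = x + 1) = L.count x + L.count (x + 1) := by
  induction L with
  | nil => simp
  | cons a L ih =>
    rw [List.countP_cons, List.count_cons, List.count_cons, ih]
    by_cases h : a = x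
    · subst h
      simp
      omega
    · by_cases h' : a = x + 1 <;> simp [h, h'] <;> omega

/-- In a weakly increasing list, more than `t` entries in `{x, x + 1}` occupy consecutive positions,
so they contain two entries at distance `t` differing by at most `1`, and conversely. -/
theorem sorted_diff_iff (t : ℕ) (L : List ℕ) (hL : L.Pairwise (· ≤ ·)) :
    (∀ s, s + t < L.length → L.getD s 0 + 2 ≤ L.getD (s + t) 0) ↔
      ∀ x, L.count x + L.count (x + 1) ≤ t := by
  have mono : ∀ (a b : ℕ) (hab : a ≤ b) (hb : b < L.length), L[a] ≤ L[b] := by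
    intro a b hab hb
    rcases hab.eq_or_lt with rfl | h
    · exact le_rfl
    · exact List.pairwise_iff_getElem.1 hL a b (by omega) hb h
  constructor
  · intro h x
    by_contra! hx
    rw [← countP_consecutive, List.countP_eq_length_filter] at hx
    obtain ⟨f, hf⟩ := List.sublist_iff_exists_orderEmbedding_getElem?_eq.1
      (List.filter_sublist (p := fun y => decide (y = x ∨ y = x + 1)) (l := L))
    -- The positions of the entries in `{x, x + 1}` are enumerated by `f`.
    have key : ∀ n, n ≤ t → ∃ hn : f n < L.length, L[f n] = x ∨ L[f n] = x + 1 := by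
      intro n hn
      have hlt := hn.trans_lt hx
      have e := hf n
      rw [List.getElem?_eq_getElem hlt] at e
      obtain ⟨hn', e'⟩ := List.getElem?_eq_some_iff.1 e.symm
      refine ⟨hn', ?_⟩
      rw [e']
      simpa using (List.mem_filter.1 (List.getElem_mem hlt)).2
    obtain ⟨h0, e0⟩ := key 0 (Nat.zero_le t)
    obtain ⟨h1, e1⟩ := key t le_rfl
    have hgap : f 0 + t ≤ f t := by
      have := f.strictMono.add_le_nat t 0
      simp at this
      omega
    have hd := h (f 0) (by omega)
    rw [List.getD_eq_getElem _ _ h0, List.getD_eq_getElem _ _ (by omega)] at hd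
    have := mono _ _ hgap h1
    omega
  · intro h s hs
    rw [List.getD_eq_getElem _ _ (by omega), List.getD_eq_getElem _ _ hs]
    by_contra! hlt
    have hle := h L[s]
    rw [← countP_consecutive] at hle
    have hsub : ((L.drop s).take (t + 1)).Sublist L :=
      (List.take_sublist _ _).trans (List.drop_sublist _ _)
    have hc := hsub.countP_le (p := fun y => decide (y = L[s] ∨ y = L[s] + 1))
    rw [List.countP_eq_length.2, List.length_take, List.length_drop] at hc
    · omega
    · intro a ha
      obtain ⟨n, hn, rfl⟩ := List.getElem_of_mem ha
      rw [List.length_take, List.length_drop] at hn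
      rw [List.getElem_take, List.getElem_drop]
      have h1 := mono s (s + n) (by omega) (by omega)
      have h2 := mono (s + n) (s + t) (by omega) hs
      simp only [decide_eq_true_eq]
      omega

theorem diff2AtDist_iff {m : ℕ} (t : ℕ) (p : Nat.Partition m) :
    Diff2AtDist t p ↔ ∀ x, p.parts.count x + p.parts.count (x + 1) ≤ t := by
  rw [Diff2AtDist, sorted_diff_iff t _ (Multiset.pairwise_sort _ _)]
  simp only [← Multiset.coe_count, Multiset.sort_eq]

/-- For `k ≥ 2`, `j ≥ 1` and `1 ≤ i, l ≤ k` (here `i l : Fin k` encode the 1-based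
indices `i+1`, `l+1`): the coefficient of `q^m` in the polynomial `h^{(j)}_{i,l}` equals
the number of partitions of `m` with difference at least 2 at distance `k−1`, with at
most `k−i` parts equal to `1` (i.e. at most `k−(i+1)` in the 0-based encoding), largest
part at most `j`, and in which the part `j` appears exactly `l−1` times (i.e. exactly
`l` times in the 0-based encoding). -/
theorem hMat_coeff_eq_card (k j m : ℕ) (hk : 2 ≤ k) (hj : 1 ≤ j) (i l : Fin k) :
    (hMat k j i l).coeff m =
      (Nat.card {p : Nat.Partition m // Diff2AtDist (k - 1) p ∧
        p.parts.count 1 ≤ k - ((i : ℕ) + 1) ∧ (∀ x ∈ p.parts, x ≤ j) ∧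
        p.parts.count j = (l : ℕ)} : ℤ) := by
  have hik := i.2
  have hcoeff : (hMat k j i l).coeff m =
      (((pathMultisets k i j l).filter (fun s => m = s.sum)).card : ℤ) := by
    rw [hMat_eq_sum, Polynomial.finsetSum_coeff]
    simp only [Polynomial.coeff_X_pow]
    rw [Finset.sum_boole]
  classical
  rw [hcoeff, Nat.cast_inj, Nat.card_eq_fintype_card, Fintype.card_subtype, eq_comm]
  have hcount : ∀ (p : Multiset ℕ) (x : ℕ), x ≠ 0 →
      (p + Multiset.replicate (i : ℕ) 0).count x = p.count x := by
    intro p x hx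
    rw [Multiset.count_add, Multiset.count_replicate, if_neg (by omega), add_zero]
  refine Finset.card_bij (fun p _ => p.parts + Multiset.replicate (i : ℕ) 0) ?_ ?_ ?_
  · intro p hp
    obtain ⟨hd, h1, hle, hl⟩ := (Finset.mem_filter.1 hp).2
    rw [diff2AtDist_iff] at hd
    have hp0 : p.parts.count 0 = 0 :=
      Multiset.count_eq_zero.2 fun h => (p.parts_pos h).ne' rfl
    have h00 : (p.parts + Multiset.replicate (i : ℕ) 0).count 0 = (i : ℕ) := by simp [hp0]
    rw [Finset.mem_filter, mem_pathMultisets hik]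
    refine ⟨⟨h00, fun x hx => ?_, ?_, fun x => ?_⟩, by simp [p.parts_sum]⟩
    · rcases Multiset.mem_add.1 hx with hx | hx
      · exact hle x hx
      · rw [Multiset.eq_of_mem_replicate hx]
        exact Nat.zero_le j
    · rw [hcount _ _ (by omega), hl]
    · rw [hcount _ (x + 1) (by omega)]
      rcases Nat.eq_zero_or_pos x with rfl | hx
      · rw [h00, zero_add]
        omega
      · rw [hcount _ x hx.ne']
        have := hd x
        omega
  · intro p _ p' _ h
    exact Nat.Partition.ext (add_right_cancel h)
  · intro s hs
    obtain ⟨hs, hsum⟩ := Finset.mem_filter.1 hs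
    obtain ⟨h0, hle, hl, hd⟩ := (mem_pathMultisets hik j l s).1 hs
    have hs' : s.filter (· ≠ 0) + Multiset.replicate (i : ℕ) 0 = s := by
      rw [← h0, ← Multiset.filter_eq', add_comm]
      exact Multiset.filter_add_not _ _
    have hc : ∀ x, x ≠ 0 → (s.filter (· ≠ 0)).count x = s.count x := fun x hx =>
      Multiset.count_filter_of_pos hx
    have hc0 : (s.filter (· ≠ 0)).count 0 = 0 :=
      Multiset.count_filter_of_neg (by simp)
    refine ⟨Nat.Partition.ofSums m s hsum.symm, ?_, hs'⟩
    rw [Finset.mem_filter, diff2AtDist_iff]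
    have h01 := hd 0
    rw [h0, zero_add] at h01
    refine ⟨Finset.mem_univ _, fun x => ?_, ?_, fun x hx => ?_, ?_⟩
    · change (s.filter (· ≠ 0)).count x + (s.filter (· ≠ 0)).count (x + 1) ≤ k - 1
      rw [hc (x + 1) (by omega)]
      have hdx := hd x
      rcases Nat.eq_zero_or_pos x with rfl | hx
      · rw [hc0]
        omega
      · rw [hc x hx.ne']
        omega
    · change (s.filter (· ≠ 0)).count 1 ≤ _
      rw [hc 1 one_ne_zero]
      omega
    · exact hle x (Multiset.mem_filter.1 hx).1
    · exact (hc j (by omega)).trans hl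
end

section
/- For every integer k ≥ 2, all integers j ≥ 2, 1 ≤ i ≤ k, and 1 ≤ l ≤ k, and every integer m ≥ 0: the number of partitions of m that have difference at least 2 at distance k−1, have at most k−i parts equal to 1, have largest part at most j, and in which the part j appears exactly l−1 times, equals the sum over p = 1, …, k−l+1 of the number of partitions of m − (l−1)j that have difference at least 2 at distance k−1, have at most k−i parts equal to 1, have largest part at most j−1, and in which the part j−1 appears exactly p−1 times (where the number of partitions of a negative integer is 0). -/
/-- In a weakly increasing list the entries less than `a` form the initial segment. -/
theorem getD_lt_iff_lt_countP (a : ℕ) (L : List ℕ) (hL : L.Pairwise (· ≤ ·)) (i : ℕ)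
    (hi : i < L.length) : L.getD i 0 < a ↔ i < L.countP (· < a) := by
  induction L generalizing i with
  | nil => simp at hi
  | cons x L ih =>
    rw [List.pairwise_cons] at hL
    obtain ⟨hx, hL⟩ := hL
    by_cases hxa : x < a
    · cases i with
      | zero => simp [hxa]
      | succ i =>
        have := ih hL i (by simpa using hi)
        simp only [List.getD_cons_succ, List.countP_cons, hxa, decide_true, if_true]
        omega
    · have h0 : (x :: L).countP (· < a) = 0 := by
        rw [List.countP_eq_zero]
        intro y hy
        rcases List.mem_cons.1 hy with rfl | hy
        · simpa using hxa
        · have := hx y hy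
          simp only [decide_eq_true_eq]
          omega
      rw [h0]
      cases i with
      | zero => simpa using hxa
      | succ i =>
        have hi' : i < L.length := by simpa using hi
        have := hx (L.getD i 0) (by
          rw [List.getD_eq_getElem _ _ hi']
          exact List.getElem_mem hi')
        simp only [List.getD_cons_succ]
        omega

theorem countP_lt_add_two (a : ℕ) (L : List ℕ) :
    L.countP (· < a + 2) = L.countP (· < a) + (L.count a + L.count (a + 1)) := by
  induction L with
  | nil => simp
  | cons x L ih =>
    simp only [List.countP_cons, List.count_cons, ih, decide_eq_true_eq, beq_iff_eq]
    split_ifs <;> omega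

/-- The difference condition at distance `t` says that at most `t` parts lie in any window
`{a, a + 1}`. -/
theorem diff2AtDist_iff_count (t : ℕ) {m : ℕ} (p : Nat.Partition m) :
    Diff2AtDist t p ↔ ∀ a, p.parts.count a + p.parts.count (a + 1) ≤ t := by
  unfold Diff2AtDist
  have hc : ∀ a, p.parts.count a = (p.parts.sort (· ≤ ·)).count a := by
    intro a
    rw [← Multiset.coe_count, Multiset.sort_eq]
  simp only [hc]
  have hL : (p.parts.sort (· ≤ ·)).Pairwise (· ≤ ·) := Multiset.pairwise_sort _ _
  generalize p.parts.sort (· ≤ ·) = L at hL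
  constructor
  · intro h a
    by_contra! hlt
    -- The window `{a, a + 1}` starts at the index `L.countP (· < a)`.
    have h2 := countP_lt_add_two a L
    have hlen : L.countP (· < a + 2) ≤ L.length := List.countP_le_length
    have hs := getD_lt_iff_lt_countP a L hL (L.countP (· < a)) (by omega)
    have ht := getD_lt_iff_lt_countP (a + 2) L hL (L.countP (· < a) + t) (by omega)
    have := h (L.countP (· < a)) (by omega)
    omega
  · intro h s hs
    by_contra! hlt
    have h2 := countP_lt_add_two (L.getD s 0) L
    have hs1 := getD_lt_iff_lt_countP (L.getD s 0) L hL s (by omega)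
    have hs2 := getD_lt_iff_lt_countP (L.getD s 0 + 2) L hL (s + t) hs
    have := h (L.getD s 0)
    omega

theorem filter_ne_add_replicate (s : Multiset ℕ) (j : ℕ) :
    s.filter (· ≠ j) + Multiset.replicate (s.count j) j = s := by
  rw [← Multiset.filter_eq', add_comm]
  exact Multiset.filter_add_not _ _

/-- Deleting all `c` parts equal to `j` is a bijection, with inverse adding `c` parts equal to
`j`; the bound on the multiplicity of `j - 1` is the window condition at `{j - 1, j}`. -/
def removeLargestEquiv (t b j c m : ℕ) (hj : 2 ≤ j) (hc : c ≤ t) (hm : c * j ≤ m) :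
    {p : Nat.Partition m // Diff2AtDist t p ∧ p.parts.count 1 ≤ b ∧
      (∀ x ∈ p.parts, x ≤ j) ∧ p.parts.count j = c} ≃
    {p : Nat.Partition (m - c * j) // (Diff2AtDist t p ∧ p.parts.count 1 ≤ b ∧
      (∀ x ∈ p.parts, x ≤ j - 1)) ∧ p.parts.count (j - 1) ≤ t - c} where
  toFun p := ⟨⟨p.1.parts.filter (· ≠ j),
      fun hx => p.1.parts_pos (Multiset.mem_of_mem_filter hx), by
        have h := congrArg Multiset.sum (filter_ne_add_replicate p.1.parts j)
        rw [Multiset.sum_add, Multiset.sum_replicate, p.1.parts_sum, p.2.2.2.2, smul_eq_mul] at h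
        omega⟩, by
    obtain ⟨p, hD, h1, hle, hcj⟩ := p
    rw [diff2AtDist_iff_count] at hD ⊢
    refine ⟨⟨fun a => ?_, ?_, fun x hx => ?_⟩, ?_⟩
    · exact (add_le_add (Multiset.count_le_of_le _ (Multiset.filter_le _ _))
        (Multiset.count_le_of_le _ (Multiset.filter_le _ _))).trans (hD a)
    · exact (Multiset.count_le_of_le _ (Multiset.filter_le _ _)).trans h1
    · have hx' := Multiset.mem_filter.1 hx
      have := hle x hx'.1
      have := hx'.2
      omega
    · have h2 := hD (j - 1)
      rw [show j - 1 + 1 = j by omega, hcj] at h2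
      have := Multiset.count_le_of_le (j - 1) (Multiset.filter_le (· ≠ j) p.parts)
      dsimp only
      omega⟩
  invFun q := ⟨⟨q.1.parts + Multiset.replicate c j, by
      intro x hx
      rcases Multiset.mem_add.1 hx with hx | hx
      · exact q.1.parts_pos hx
      · have := Multiset.eq_of_mem_replicate hx
        omega, by
      rw [Multiset.sum_add, Multiset.sum_replicate, q.1.parts_sum, smul_eq_mul]
      omega⟩, by
    obtain ⟨q, ⟨hD, h1, hle⟩, hcj⟩ := q
    rw [diff2AtDist_iff_count] at hD ⊢
    have h0 : ∀ x, j ≤ x → q.parts.count x = 0 := fun x hx =>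
      Multiset.count_eq_zero.2 fun hmem => by
        have := hle x hmem
        omega
    refine ⟨fun a => ?_, ?_, fun x hx => ?_, ?_⟩
    · have hDa := hD a
      simp only [Multiset.count_add, Multiset.count_replicate]
      rcases lt_trichotomy (a + 1) j with h | h | h
      · rw [if_neg (by omega), if_neg (by omega)]
        omega
      · have := h0 (a + 1) h.ge
        rw [show j - 1 = a by omega] at hcj
        rw [if_neg (by omega), if_pos h.symm]
        omega
      · have := h0 a (by omega)
        have := h0 (a + 1) (by omega)
        split_ifs <;> omega
    · simp only [Multiset.count_add, Multiset.count_replicate]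
      rw [if_neg (by omega)]
      omega
    · rcases Multiset.mem_add.1 hx with hx | hx
      · have := hle x hx
        omega
      · exact (Multiset.eq_of_mem_replicate hx).le
    · simp [Multiset.count_add, h0 j le_rfl]⟩
  left_inv p := by
    apply Subtype.ext
    apply Nat.Partition.ext
    have h := filter_ne_add_replicate p.1.parts j
    rwa [p.2.2.2.2] at h
  right_inv q := by
    apply Subtype.ext
    apply Nat.Partition.ext
    change (q.1.parts + Multiset.replicate c j).filter (· ≠ j) = q.1.parts
    rw [Multiset.filter_add, Multiset.filter_eq_self.2, Multiset.filter_eq_nil.2, add_zero]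
    · intro x hx
      simpa using Multiset.eq_of_mem_replicate hx
    · intro x hx
      have := q.2.1.2.2 x hx
      omega

/-- Combinatorial recursion for the entries of `h^{(j)}`: for `k ≥ 2`, `j ≥ 2`,
`1 ≤ i ≤ k`, `1 ≤ l ≤ k` and `m ≥ 0`, the number of partitions of `m` with difference at
least 2 at distance `k−1`, at most `k−i` parts equal to `1`, largest part at most `j`,
and exactly `l−1` parts equal to `j`, equals `Σ_{p=1}^{k−l+1}` of the number of
partitions of `m − (l−1)j` with difference at least 2 at distance `k−1`, at most `k−i`
parts equal to `1`, largest part at most `j−1`, and exactly `p−1` parts equal to `j−1`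
(the number of partitions of a negative integer being `0`, whence the case split on
`(l−1)j ≤ m`). -/
theorem card_partitions_recursion (k j i l m : ℕ) (hk : 2 ≤ k) (hj : 2 ≤ j)
    (hi1 : 1 ≤ i) (hik : i ≤ k) (hl1 : 1 ≤ l) (hlk : l ≤ k) :
    Nat.card {p : Nat.Partition m // Diff2AtDist (k - 1) p ∧ p.parts.count 1 ≤ k - i ∧
      (∀ x ∈ p.parts, x ≤ j) ∧ p.parts.count j = l - 1} =
    (if (l - 1) * j ≤ m then
      ∑ r ∈ Finset.Icc 1 (k - l + 1),
        Nat.card {p : Nat.Partition (m - (l - 1) * j) // Diff2AtDist (k - 1) p ∧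
          p.parts.count 1 ≤ k - i ∧ (∀ x ∈ p.parts, x ≤ j - 1) ∧
          p.parts.count (j - 1) = r - 1}
    else 0) := by
  classical
  split_ifs with hm
  · rw [Nat.card_congr (removeLargestEquiv (k - 1) (k - i) j (l - 1) m hj (by omega) hm)]
    simp only [Nat.card_eq_fintype_card, Fintype.card_subtype]
    rw [Finset.card_eq_sum_card_fiberwise
      (f := fun p : Nat.Partition (m - (l - 1) * j) => p.parts.count (j - 1) + 1)
      (t := Finset.Icc 1 (k - l + 1))]
    · refine Finset.sum_congr rfl fun r hr => ?_
      rw [Finset.mem_Icc] at hr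
      rw [Finset.filter_filter]
      congr 1
      ext p
      simp only [Finset.mem_filter, Finset.mem_univ, true_and]
      constructor
      · rintro ⟨⟨⟨h1, h2, h3⟩, h4⟩, h5⟩
        exact ⟨h1, h2, h3, by omega⟩
      · rintro ⟨h1, h2, h3, h4⟩
        exact ⟨⟨⟨h1, h2, h3⟩, by omega⟩, by omega⟩
    · intro p hp
      have hp' := (Finset.mem_filter.1 hp).2.2
      simp only [Finset.coe_Icc, Set.mem_Icc]
      omega
  · rw [Nat.card_eq_zero]
    -- The parts equal to `j` would already sum to more than `m`.
    refine Or.inl ⟨fun ⟨p, _, _, _, hcj⟩ => hm ?_⟩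
    have h := congrArg Multiset.sum (filter_ne_add_replicate p.parts j)
    rw [Multiset.sum_add, Multiset.sum_replicate, p.parts_sum, hcj, smul_eq_mul] at h
    omega
end

section
/- Fix an integer k ≥ 2. Suppose J and J' are sequences of formal power series in ℚ[[q]], indexed by the positive integers, each satisfying: (a) for all j ≥ 1 and 1 ≤ l ≤ k−1, J_{(k−1)(j−1)+l} = J_{(k−1)(j−1)+l+1} + q^{(k−l)j} · J_{(k−1)j+k−l+1}; and (b) for all j ≥ 0 and 1 ≤ i ≤ k, J_{(k−1)j+i} − 1 is divisible by q^{j+1} in ℚ[[q]]. Then J_s = J'_s for every s ≥ 1; that is, there is at most one sequence of formal power series satisfying the recursions (a) together with the Empirical Hypothesis (b). -/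
open PowerSeries

/-!
The difference `D = J - J'` satisfies the homogeneous form of (a),
`D s = D (s + 1) + q ^ e * D t` with `e ≥ 1`. If `q ^ N` divides every term of `D`, then
`D s ≡ D (s + 1)` modulo `q ^ (N + 1)` for every `s ≥ 1`, so `D` is constant modulo
`q ^ (N + 1)`; by (b) its terms vanish modulo `q ^ (N + 1)` far out, so `q ^ (N + 1)` divides
every term. By induction every term of `D` is divisible by all powers of `q`, hence is zero.
-/

/-- The recursion (a), which is indexed by pairs `(j, l)`, rewritten at a single index `s`. The
only feature of the exponent that matters is that it is positive. -/
lemma exists_step (k : ℕ) (hk : 2 ≤ k) (s : ℕ) (hs : 1 ≤ s) :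
    ∃ e t, 1 ≤ t ∧ ∀ J : ℕ → PowerSeries ℚ,
      (∀ j, 1 ≤ j → ∀ l, 1 ≤ l → l ≤ k - 1 →
        J ((k - 1) * (j - 1) + l) =
          J ((k - 1) * (j - 1) + l + 1) +
            (PowerSeries.X : PowerSeries ℚ) ^ ((k - l) * j) *
              J ((k - 1) * j + (k - l + 1))) →
      J s = J (s + 1) + (PowerSeries.X : PowerSeries ℚ) ^ (e + 1) * J t := by
  -- Division of `s - 1` by `k - 1` has quotient `j - 1` and remainder `l - 1`.
  have hmod := Nat.mod_lt (s - 1) (show 0 < k - 1 by omega)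
  have hdiv := Nat.div_add_mod (s - 1) (k - 1)
  set j := (s - 1) / (k - 1) + 1 with hj
  set l := (s - 1) % (k - 1) + 1 with hl
  have hj1 : 1 ≤ j := Nat.le_add_left _ _
  have hpos : 0 < (k - l) * j := Nat.mul_pos (by omega) hj1
  refine ⟨(k - l) * j - 1, (k - 1) * j + (k - l + 1), by omega, fun J ha => ?_⟩
  have hsl : (k - 1) * (j - 1) + l = s := by
    simp only [hj, Nat.add_sub_cancel]
    omega
  have h := ha j hj1 l (by omega) (by omega)
  rwa [hsl, show (k - l) * j = (k - l) * j - 1 + 1 by omega] at h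

/-- Uniqueness: fix `k ≥ 2`.  If `J, J' : {1, 2, …} → ℚ⟦q⟧` both satisfy
(a) `J_{(k−1)(j−1)+l} = J_{(k−1)(j−1)+l+1} + q^{(k−l)j} · J_{(k−1)j+k−l+1}` for all
`j ≥ 1` and `1 ≤ l ≤ k−1`, and
(b) `q^{j+1} ∣ J_{(k−1)j+i} − 1` for all `j ≥ 0` and `1 ≤ i ≤ k`
(the Empirical Hypothesis), then `J_s = J'_s` for every `s ≥ 1`. -/
theorem uniqueness_of_sequence (k : ℕ) (hk : 2 ≤ k)
    (J J' : ℕ → PowerSeries ℚ)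
    (haJ : ∀ j, 1 ≤ j → ∀ l, 1 ≤ l → l ≤ k - 1 →
      J ((k - 1) * (j - 1) + l) =
        J ((k - 1) * (j - 1) + l + 1) +
          (PowerSeries.X : PowerSeries ℚ) ^ ((k - l) * j) * J ((k - 1) * j + (k - l + 1)))
    (hbJ : ∀ j i, 1 ≤ i → i ≤ k →
      (PowerSeries.X : PowerSeries ℚ) ^ (j + 1) ∣ (J ((k - 1) * j + i) - 1))
    (haJ' : ∀ j, 1 ≤ j → ∀ l, 1 ≤ l → l ≤ k - 1 →
      J' ((k - 1) * (j - 1) + l) =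
        J' ((k - 1) * (j - 1) + l + 1) +
          (PowerSeries.X : PowerSeries ℚ) ^ ((k - l) * j) * J' ((k - 1) * j + (k - l + 1)))
    (hbJ' : ∀ j i, 1 ≤ i → i ≤ k →
      (PowerSeries.X : PowerSeries ℚ) ^ (j + 1) ∣ (J' ((k - 1) * j + i) - 1)) :
    ∀ s, 1 ≤ s → J s = J' s := by
  have hdvd : ∀ N s, 1 ≤ s → (PowerSeries.X : PowerSeries ℚ) ^ N ∣ J s - J' s := by
    intro N
    induction N with
    | zero => intro s _; simp
    | succ N ih =>
      have hstep : ∀ s, 1 ≤ s →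
          (PowerSeries.X : PowerSeries ℚ) ^ (N + 1) ∣ J (s + 1) - J' (s + 1) →
          (PowerSeries.X : PowerSeries ℚ) ^ (N + 1) ∣ J s - J' s := by
        intro s hs h
        obtain ⟨e, t, ht, hrec⟩ := exists_step k hk s hs
        obtain ⟨c, hc⟩ := ih t ht
        have hD : J s - J' s = (J (s + 1) - J' (s + 1)) +
            (PowerSeries.X : PowerSeries ℚ) ^ (N + 1) * (PowerSeries.X ^ e * c) := by
          rw [hrec J haJ, hrec J' haJ']
          linear_combination (PowerSeries.X : PowerSeries ℚ) ^ (e + 1) * hc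
        rw [hD]
        exact dvd_add h (dvd_mul_right _ _)
      have hdescend : ∀ d s, 1 ≤ s →
          (PowerSeries.X : PowerSeries ℚ) ^ (N + 1) ∣ J (s + d) - J' (s + d) →
          (PowerSeries.X : PowerSeries ℚ) ^ (N + 1) ∣ J s - J' s := by
        intro d
        induction d with
        | zero => intro s _ h; exact h
        | succ d ihd =>
          intro s hs h
          refine hstep s hs (ihd (s + 1) (by omega) ?_)
          rwa [show s + 1 + d = s + (d + 1) by omega]
      intro s hs
      -- The index `(k - 1) * (N + s) + 1` is at least `s`, and (b) applies there with `j ≥ N`.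
      have hle : N + s ≤ (k - 1) * (N + s) := Nat.le_mul_of_pos_left _ (by omega)
      refine hdescend ((k - 1) * (N + s) + 1 - s) s hs ?_
      rw [show s + ((k - 1) * (N + s) + 1 - s) = (k - 1) * (N + s) + 1 by omega]
      have h := dvd_sub (hbJ (N + s) 1 le_rfl (by omega)) (hbJ' (N + s) 1 le_rfl (by omega))
      rw [sub_sub_sub_cancel_right] at h
      exact (pow_dvd_pow _ (by omega)).trans h
  intro s hs
  rw [← sub_eq_zero]
  ext n
  rw [map_zero]
  exact PowerSeries.X_pow_dvd_iff.mp (hdvd (n + 1) s hs) n (Nat.lt_succ_self n)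
end
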